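/- Let K be an algebraically closed field and let m_1 < m_2 < … < m_n be positive integers such that gcd(m_{i−1}, m_1) = 1 and m_i ≥ max{m_{i−1}·m_1, m_{i−1}·(m_{i−1} − m_1)} for all 3 ≤ i ≤ n. Then the monomial curve C(m_1, m_2, …, m_n) in P^n is a set-theoretic complete intersection: there exist n − 1 homogeneous polynomials in K[x_0, …, x_n] whose set of common zeros in K^{n+1} is exactly the affine cone {(u^{m_n}, u^{m_n − m_1} v^{m_1}, …, u^{m_n − m_{n−1}} v^{m_{n−1}}, v^{m_n}) : u, v ∈ K}. -/

import Mathlib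

lemma exps_aux (s p M k : ℕ) (hs : 0 < s) (hsp : s < p) (hpM : p < M)
    (hc : Nat.Coprime p s) (h1 : p * s ≤ M) (h2 : p * (p - s) ≤ M) (hk : k ≤ p) :
    ∃ e a b : ℕ, e + a + b = M - p + k ∧ a * s + b * p = k * M ∧
      (k < p → 0 < e ∨ 0 < a) ∧ (k = p → e = 0 ∧ a = 0 ∧ b = M) := by
  rcases Nat.eq_or_lt_of_le hk with rfl | hkp
  · exact ⟨0, 0, M, by omega, by ring, by omega, by simp⟩
  rcases Nat.eq_zero_or_pos k with rfl | hk0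
  · exact ⟨M - p, 0, 0, by omega, by simp, by omega, by omega⟩
  have hp : 0 < p := by omega
  -- find a
  obtain ⟨a, ha, hmod⟩ : ∃ a < p, a * s ≡ k * M [MOD p] := by
    obtain ⟨r, hr⟩ := Nat.exists_mul_mod_eq_of_coprime (k * M % p) hc.symm (by omega)
    refine ⟨r % p, Nat.mod_lt _ hp, ?_⟩
    have : r % p * s ≡ r * s [MOD p] := (Nat.mod_modEq r p).mul_right s
    refine this.trans ?_
    unfold Nat.ModEq
    rw [mul_comm r s, hr.2]
    simp
  have hle : a * s ≤ k * M := by nlinarith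
  obtain ⟨b, hb⟩ := (Nat.modEq_iff_dvd' hle).1 hmod
  have hb' : a * s + b * p = k * M := by
    rw [mul_comm b p, ← hb]; omega
  have key : a + b < M - p + k + 1 ∧ (a = 0 → b < M - p + k) := by
    obtain ⟨j, rfl⟩ : ∃ j, p = k + j := ⟨p - k, by omega⟩
    obtain ⟨d, hd⟩ : ∃ d, k + j = s + d := ⟨k + j - s, by omega⟩
    obtain ⟨N, rfl⟩ : ∃ N, M = k + j + N := ⟨M - (k + j), by omega⟩
    have hd' : k + j - s = d := by omega
    have hN : k + j + N - (k + j) = N := by omega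
    rw [hd'] at h2
    rw [hN]
    have hj : 0 < j := by omega
    have hd0 : 0 < d := by omega
    generalize hP : k + j = p at *
    constructor
    · by_contra hcon
      push Not at hcon
      -- p (a+b) ≥ p (N+k+1)
      have e1 : p * (N + k + 1) ≤ p * (a + b) := Nat.mul_le_mul_left _ hcon
      have e2 : p * (a + b) = a * d + k * (p + N) := by
        have : a * p = a * s + a * d := by rw [hd]; ring
        nlinarith
      have e3 : a * d + d ≤ p * d := by nlinarith
      -- p N + p ≤ a d + k N
      have e4 : p * N + p ≤ a * d + k * N := by nlinarith
      have e5 : j * N + p ≤ a * d := by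
        have : p * N = k * N + j * N := by rw [← hP]; ring
        omega
      have e6 : N ≤ j * N := Nat.le_mul_of_pos_left _ hj
      omega
    · intro h0
      subst h0
      by_contra hcon
      push Not at hcon
      have e1 : p * (N + k) ≤ p * b := Nat.mul_le_mul_left _ hcon
      have : p * N ≤ k * N := by nlinarith
      have hN0 : 0 < N := by omega
      have := Nat.le_of_mul_le_mul_right this hN0
      omega
  exact ⟨M - p + k - a - b, a, b, by omega, hb', by omega, by omega⟩

lemma poly_aux {K : Type*} [Field K] (q s p M : ℕ) (hs : 0 < s) (hsp : s < p) (hpM : p < M)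
    (hc : Nat.Coprime p s) (h1 : p * s ≤ M) (h2 : p * (p - s) ≤ M) :
    ∃ F : MvPolynomial ℕ K, F.IsHomogeneous M ∧ F.vars ⊆ {0, 1, q, q + 1} ∧
      (∀ (x : ℕ → K) (t : K), x 1 = x 0 * t ^ s → x q = x 0 * t ^ p →
        MvPolynomial.eval x F = x 0 ^ (M - p) * (x (q + 1) - x 0 * t ^ M) ^ p) ∧
      (∀ (x : ℕ → K), x 0 = 0 → x 1 = 0 → (MvPolynomial.eval x F = 0 ↔ x q = 0)) := by
  have H : ∀ k : ℕ, ∃ e a b : ℕ, k ≤ p → e + a + b = M - p + k ∧ a * s + b * p = k * M ∧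
      (k < p → 0 < e ∨ 0 < a) ∧ (k = p → e = 0 ∧ a = 0 ∧ b = M) := by
    intro k
    by_cases hk : k ≤ p
    · obtain ⟨e, a, b, h⟩ := exps_aux s p M k hs hsp hpM hc h1 h2 hk
      exact ⟨e, a, b, fun _ => h⟩
    · exact ⟨0, 0, 0, fun h => absurd h hk⟩
  choose e a b h using H
  refine ⟨∑ k ∈ Finset.range (p + 1), MvPolynomial.C ((-1) ^ k * (p.choose k : K)) *
    (MvPolynomial.X (q + 1) ^ (p - k) * (MvPolynomial.X 0 ^ e k * MvPolynomial.X 1 ^ a k *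
      MvPolynomial.X q ^ b k)), ?_, ?_, ?_, ?_⟩
  · apply MvPolynomial.IsHomogeneous.sum
    intro k hk
    have hk' : k ≤ p := by simpa [Nat.lt_succ_iff] using hk
    obtain ⟨g1, -⟩ := h k hk'
    have : M = 0 + ((p - k) + (e k + a k + b k)) := by omega
    rw [this]
    have hX : ∀ (i r : ℕ), (MvPolynomial.X i ^ r : MvPolynomial ℕ K).IsHomogeneous r := by
      intro i r
      simpa using (MvPolynomial.isHomogeneous_X K i).pow r
    exact (MvPolynomial.isHomogeneous_C _ _).mul ((hX _ _).mul (((hX _ _).mul (hX _ _)).mul (hX _ _)))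
  · have hX : ∀ (i r : ℕ), i ∈ ({0, 1, q, q + 1} : Finset ℕ) →
        (MvPolynomial.X i ^ r : MvPolynomial ℕ K).vars ⊆ {0, 1, q, q + 1} := by
      intro i r hi
      refine (MvPolynomial.vars_pow _ _).trans ?_
      rw [MvPolynomial.vars_X]
      simpa using hi
    have hm : ∀ f g : MvPolynomial ℕ K, f.vars ⊆ {0, 1, q, q + 1} → g.vars ⊆ {0, 1, q, q + 1} →
        (f * g).vars ⊆ {0, 1, q, q + 1} := fun f g hf hg =>
      (MvPolynomial.vars_mul f g).trans (Finset.union_subset hf hg)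
    refine (MvPolynomial.vars_sum_subset _ _).trans ?_
    apply Finset.biUnion_subset.2
    intro k _
    refine hm _ _ (by rw [MvPolynomial.vars_C]; exact Finset.empty_subset _) (hm _ _ (hX _ _ (by simp)) (hm _ _ (hm _ _ (hX _ _ (by simp))
      (hX _ _ (by simp))) (hX _ _ (by simp))))
  · intro x t hx1 hxq
    rw [sub_eq_neg_add, add_pow, Finset.mul_sum, map_sum]
    apply Finset.sum_congr rfl
    intro k hk
    have hk' : k ≤ p := by simpa [Nat.lt_succ_iff] using hk
    obtain ⟨g1, g2, -⟩ := h k hk'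
    simp only [map_mul, map_pow, MvPolynomial.eval_C, MvPolynomial.eval_X]
    rw [hx1, hxq]
    have : x 0 ^ e k * (x 0 * t ^ s) ^ a k * (x 0 * t ^ p) ^ b k = x 0 ^ (M - p) * (x 0 * t ^ M) ^ k := by
      calc _ = x 0 ^ (e k + a k + b k) * t ^ (a k * s + b k * p) := by ring
        _ = _ := by rw [g1, g2]; ring
    rw [this, neg_pow (x 0 * t ^ M)]
    ring
  · intro x hx0 hx1
    rw [Finset.sum_range_succ, map_add, map_sum, Finset.sum_eq_zero]
    · obtain ⟨-, -, -, g⟩ := h p le_rfl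
      obtain ⟨g1, g2, g3⟩ := g rfl
      have hM : M ≠ 0 := by omega
      simp [g1, g2, g3, hM]
    · intro k hk
      have hk' : k < p := by simpa using hk
      obtain ⟨-, -, g, -⟩ := h k hk'.le
      simp only [map_mul, map_pow, MvPolynomial.eval_C, MvPolynomial.eval_X, hx0, hx1]
      rcases g hk' with g | g
      · simp [g.ne']
      · simp [g.ne']

lemma param_aux {K : Type*} [Field K] (a b : ℕ) (ha : 0 < a) (hb : 0 < b) (hc : Nat.Coprime a b)
    (y z : K) (h : y ^ b = z ^ a) : ∃ t : K, y = t ^ a ∧ z = t ^ b := by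
  by_cases hy : y = 0
  · subst hy
    rw [zero_pow hb.ne'] at h
    have hz : z = 0 := pow_eq_zero_iff ha.ne' |>.1 h.symm
    exact ⟨0, by simp [ha.ne'], by simp [hz, hb.ne']⟩
  have hz : z ≠ 0 := by
    rintro rfl
    rw [zero_pow ha.ne'] at h
    exact hy (pow_eq_zero_iff hb.ne' |>.1 h)
  have bez : (a : ℤ) * Nat.gcdA a b + b * Nat.gcdB a b = 1 := by
    rw [← Nat.gcd_eq_gcd_ab, hc.gcd_eq_one]; simp
  generalize Nat.gcdA a b = r at bez
  generalize Nat.gcdB a b = w at bez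
  have h' : y ^ (b : ℤ) = z ^ (a : ℤ) := by exact_mod_cast h
  refine ⟨y ^ r * z ^ w, ?_, ?_⟩
  · rw [← zpow_natCast, mul_zpow, ← zpow_mul, ← zpow_mul, mul_comm w, zpow_mul z, ← h', ← zpow_mul,
      ← zpow_add₀ hy, mul_comm r, bez, zpow_one]
  · rw [← zpow_natCast, mul_zpow, ← zpow_mul, ← zpow_mul, mul_comm r, zpow_mul y, h', ← zpow_mul,
      ← zpow_add₀ hz, mul_comm w, bez, zpow_one]

/-- Proposition 1 of the paper: if `m_1 < m_2 < ⋯ < m_n` are positive integers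
with `gcd(m_1, …, m_n) = 1`, `gcd(m_{i-1}, m_1) = 1` and
`m_i ≥ max{m_{i-1}·m_1, m_{i-1}·(m_{i-1} - m_1)}` for all `3 ≤ i ≤ n`, then the
monomial curve `C(m_1, …, m_n) ⊆ ℙⁿ` over an algebraically closed field `K` is a
set-theoretic complete intersection: there are `n - 1` homogeneous polynomials
in `K[x_0, …, x_n]` whose common zero locus in `K^{n+1}` is exactly the affine
cone `{(u^{m_n}, u^{m_n-m_1}v^{m_1}, …, u^{m_n-m_{n-1}}v^{m_{n-1}}, v^{m_n})}`. -/
theorem stmt_14 {K : Type*} [Field K] [IsAlgClosed K] (n : ℕ) (hn : 2 ≤ n)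
    (m : ℕ → ℕ)
    (hpos : ∀ i, 1 ≤ i → i ≤ n → 0 < m i)
    (hmono : ∀ i, 1 ≤ i → i < n → m i < m (i + 1))
    (hgcd : Finset.gcd (Finset.Icc 1 n) m = 1)
    (hcop : ∀ i, 3 ≤ i → i ≤ n → Nat.Coprime (m (i - 1)) (m 1))
    (hbig : ∀ i, 3 ≤ i → i ≤ n →
      m (i - 1) * m 1 ≤ m i ∧ m (i - 1) * (m (i - 1) - m 1) ≤ m i) :
    ∃ F : ℕ → MvPolynomial ℕ K,
      (∀ j, j < n - 1 → ∃ d, (F j).IsHomogeneous d) ∧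
      (∀ j, j < n - 1 → (F j).vars ⊆ Finset.range (n + 1)) ∧
      ∀ x : ℕ → K,
        (∀ j, j < n - 1 → MvPolynomial.eval x (F j) = 0) ↔
        ∃ u v : K, x 0 = u ^ m n ∧
          ∀ j, 1 ≤ j → j ≤ n → x j = u ^ (m n - m j) * v ^ m j := by
  have hlt : ∀ j, j ≤ n → ∀ i, 1 ≤ i → i < j → m i < m j := by
    intro j
    induction j with
    | zero => intro _ i _ h; omega
    | succ j ih =>
      intro hj i hi hij
      rcases Nat.eq_or_lt_of_le (Nat.lt_succ_iff.1 hij) with rfl | h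
      · exact hmono i hi (by omega)
      · exact (ih (by omega) i hi h).trans (hmono j (by omega) (by omega))
  have h12 : Nat.Coprime (m 1) (m 2) := by
    rcases Nat.eq_or_lt_of_le hn with rfl | h3
    · have : Finset.Icc 1 2 = ({1, 2} : Finset ℕ) := by decide
      rw [this] at hgcd
      simp only [Finset.gcd_insert, Finset.gcd_singleton, normalize_eq] at hgcd
      exact hgcd
    · exact (hcop 3 le_rfl h3).symm
  have hm1 : 0 < m 1 := hpos 1 le_rfl (by omega)
  have hm2 : 0 < m 2 := hpos 2 (by omega) hn
  have hmn : 0 < m n := hpos n (by omega) le_rfl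
  have hm12 : m 1 < m 2 := hmono 1 le_rfl (by omega)
  -- the polynomials
  have HF : ∀ j : ℕ, ∃ F : MvPolynomial ℕ K, j < n - 1 → (∃ d, F.IsHomogeneous d) ∧
      F.vars ⊆ Finset.range (n + 1) ∧
      (∀ (x : ℕ → K) (t : K), x 0 ≠ 0 → x 1 = x 0 * t ^ m 1 → x (j + 1) = x 0 * t ^ m (j + 1) →
        (MvPolynomial.eval x F = 0 ↔ x (j + 2) = x 0 * t ^ m (j + 2) ∨
          (j = 0 ∧ MvPolynomial.eval x F = 0))) ∧
      (∀ x : ℕ → K, x 0 = 0 → (0 < j → x 1 = 0) → (MvPolynomial.eval x F = 0 ↔ x (j + 1) = 0)) ∧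
      (j = 0 → ∀ x : ℕ → K, MvPolynomial.eval x F =
        x 1 ^ m 2 - x 0 ^ (m 2 - m 1) * x 2 ^ m 1) := by
    intro j
    by_cases hj : j < n - 1
    swap
    · exact ⟨0, fun h => absurd h hj⟩
    rcases Nat.eq_zero_or_pos j with rfl | hj0
    · refine ⟨MvPolynomial.X 1 ^ m 2 - MvPolynomial.X 0 ^ (m 2 - m 1) * MvPolynomial.X 2 ^ m 1,
        fun _ => ⟨⟨m 2, ?_⟩, ?_, ?_, ?_, ?_⟩⟩
      · have hX : ∀ (i r : ℕ), (MvPolynomial.X i ^ r : MvPolynomial ℕ K).IsHomogeneous r := by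
          intro i r
          simpa using (MvPolynomial.isHomogeneous_X K i).pow r
        refine (hX _ _).sub ?_
        have := (hX 0 (m 2 - m 1)).mul (hX 2 (m 1))
        rwa [Nat.sub_add_cancel hm12.le] at this
      · have hX : ∀ (i r : ℕ), i < n + 1 →
            (MvPolynomial.X i ^ r : MvPolynomial ℕ K).vars ⊆ Finset.range (n + 1) := by
          intro i r hi
          refine (MvPolynomial.vars_pow _ _).trans ?_
          rw [MvPolynomial.vars_X]
          simpa using hi
        refine (MvPolynomial.vars_sub_subset _ ).trans (Finset.union_subset (hX _ _ (by omega)) ?_)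
        exact (MvPolynomial.vars_mul _ _).trans
          (Finset.union_subset (hX _ _ (by omega)) (hX _ _ (by omega)))
      · intro x t hx0 hx1 _
        refine ⟨fun h => Or.inr ⟨rfl, h⟩, ?_⟩
        rintro (h | h)
        · simp only [zero_add] at h
          simp only [map_sub, map_mul, map_pow, MvPolynomial.eval_X]
          rw [h, hx1]
          obtain ⟨d, hd⟩ := Nat.exists_eq_add_of_lt hm12
          have : m 2 - m 1 = d + 1 := by omega
          rw [this, hd]
          ring
        · exact h.2
      · intro x hx0 _
        have : m 2 - m 1 ≠ 0 := by omega
        simp [hx0, this, hm2.ne']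
      · intro _ x
        simp
    · have hb := hbig (j + 2) (by omega) (by omega)
      have hcc := hcop (j + 2) (by omega) (by omega)
      have e1 : j + 2 - 1 = j + 1 := by omega
      rw [e1] at hb hcc
      obtain ⟨F, f1, f2, f3, f4⟩ := poly_aux (K := K) (j + 1) (m 1) (m (j + 1)) (m (j + 2)) hm1
        (hlt _ (by omega) 1 le_rfl (by omega)) (hmono (j + 1) (by omega) (by omega)) hcc hb.1 hb.2
      refine ⟨F, fun _ => ⟨⟨_, f1⟩, ?_, ?_, ?_, by omega⟩⟩
      · refine f2.trans ?_
        intro i hi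
        simp only [Finset.mem_insert, Finset.mem_singleton] at hi
        simp only [Finset.mem_range]
        omega
      · intro x t hx0 hx1 hxj
        have hmj : m (j + 1) ≠ 0 := (hpos (j + 1) (by omega) (by omega)).ne'
        rw [f3 x t hx1 hxj, mul_eq_zero, or_iff_right (pow_ne_zero _ hx0), pow_eq_zero_iff hmj,
          sub_eq_zero]
        have : j ≠ 0 := hj0.ne'
        simp [this]
      · intro x hx0 hx1
        exact f4 x hx0 (hx1 hj0)
  choose F hF using HF
  refine ⟨F, fun j hj => (hF j hj).1, fun j hj => (hF j hj).2.1, fun x => ⟨fun h => ?_, ?_⟩⟩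
  · by_cases hx0 : x 0 = 0
    · have hz : ∀ j, j < n - 1 → x (j + 1) = 0 := by
        intro j
        have h1 : x 1 = 0 := ((hF 0 (by omega)).2.2.2.1 x hx0 (by omega)).1 (h 0 (by omega))
        intro hj
        exact ((hF j hj).2.2.2.1 x hx0 (fun _ => h1)).1 (h j hj)
      obtain ⟨v, hv⟩ := IsAlgClosed.exists_pow_nat_eq (x n) hmn
      refine ⟨0, v, by simp [hx0, hmn.ne'], ?_⟩
      intro j hj1 hjn
      rcases Nat.eq_or_lt_of_le hjn with rfl | hlt'
      · simp [hv]
      · obtain ⟨i, rfl⟩ : ∃ i, j = i + 1 := ⟨j - 1, by omega⟩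
        have : m n - m (i + 1) ≠ 0 := by
          have := hlt n le_rfl (i + 1) hj1 hlt'
          omega
        rw [hz i (by omega), zero_pow this, zero_mul]
    · obtain ⟨u, hu⟩ := IsAlgClosed.exists_pow_nat_eq (x 0) hmn
      have hu0 : u ≠ 0 := by
        rintro rfl
        exact hx0 (by rw [← hu, zero_pow hmn.ne'])
      have h0 := h 0 (by omega)
      rw [(hF 0 (by omega)).2.2.2.2 rfl] at h0
      obtain ⟨t, ht1, ht2⟩ := param_aux (m 1) (m 2) hm1 hm2 h12 (x 1 / x 0) (x 2 / x 0) (by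
        rw [div_pow, div_pow, div_eq_div_iff (pow_ne_zero _ hx0) (pow_ne_zero _ hx0),
          sub_eq_zero.1 h0]
        obtain ⟨d, hd⟩ := Nat.exists_eq_add_of_lt hm12
        have : m 2 - m 1 = d + 1 := by omega
        rw [this, hd]
        ring)
      rw [div_eq_iff hx0, mul_comm] at ht1 ht2
      have hall : ∀ j, j < n → x (j + 1) = x 0 * t ^ m (j + 1) := by
        intro j
        induction j with
        | zero => intro _; exact ht1
        | succ j ih =>
          intro hj
          rcases Nat.eq_zero_or_pos j with rfl | hj0
          · exact ht2
          · have := ((hF j (by omega)).2.2.1 x t hx0 ht1 (ih (by omega))).1 (h j (by omega))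
            rcases this with h | h
            · exact h
            · omega
      refine ⟨u, t * u, hu.symm, ?_⟩
      intro j hj1 hjn
      obtain ⟨i, rfl⟩ : ∃ i, j = i + 1 := ⟨j - 1, by omega⟩
      have hle : m (i + 1) ≤ m n := by
        rcases Nat.eq_or_lt_of_le hjn with h | h
        · rw [h]
        · exact (hlt n le_rfl _ hj1 h).le
      rw [hall i (by omega), ← hu, mul_pow, mul_left_comm, ← pow_add, Nat.sub_add_cancel hle,
        mul_comm]
  · rintro ⟨u, v, hx0, hx⟩ j hj
    by_cases hu : u = 0
    · subst hu
      rw [zero_pow hmn.ne'] at hx0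
      have hz : ∀ i, 1 ≤ i → i < n → x i = 0 := by
        intro i hi hin
        have : m n - m i ≠ 0 := by
          have := hlt n le_rfl i hi hin
          omega
        rw [hx i hi hin.le, zero_pow this, zero_mul]
      exact ((hF j hj).2.2.2.1 x hx0 (fun _ => hz 1 le_rfl (by omega))).2
        (hz _ (by omega) (by omega))
    · have hall : ∀ i, 1 ≤ i → i ≤ n → x i = x 0 * (v / u) ^ m i := by
        intro i hi hin
        have hle : m i ≤ m n := by
          rcases Nat.eq_or_lt_of_le hin with h | h
          · rw [h]
          · exact (hlt n le_rfl _ hi h).le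
        rw [hx i hi hin, hx0, div_pow, pow_sub₀ _ hu hle]
        field_simp
      have hx0' : x 0 ≠ 0 := by rw [hx0]; exact pow_ne_zero _ hu
      exact ((hF j hj).2.2.1 x (v / u) hx0' (hall 1 le_rfl (by omega))
        (hall (j + 1) (by omega) (by omega))).2 (Or.inl (hall (j + 2) (by omega) (by omega)))
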